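/- Let R be a commutative ring. In the poset, ordered by inclusion, of localizing subcategories of D(R) of the form Loc({R_f : f ∈ √J}) with J an ideal of R, the finite elements are exactly those of the form Loc({R_f : f ∈ √J}) with J a finitely generated ideal. -/

import Mathlib

/-!
Everything in `locRad R J` admits only the zero map to objects annihilated by `√J`, since every
`f ∈ √J` is invertible on `R_f`. Testing `M` against `M ⧸ √J M` gives `M = √J M` for every module
`M` in `locRad R J`, so `R_f ∈ locRad R J` exactly when `f ∈ √J`. Thus `J ↦ locRad R J` is the lower
adjoint of a Galois insertion from the lattice of ideals, with closure operator `J ↦ √J`. It sends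
finitely generated ideals to finite elements because `J ≤ √(⨆ I)` means `J ^ n ≤ ⨆ I` for some `n`
when `J` is finitely generated; conversely every element is a join of images of finitely generated
ideals.
-/

open CategoryTheory CategoryTheory.Limits CategoryTheory.Pretriangulated ZeroObject

universe w w' v u

section TriangulatedDefs

variable {T : Type u} [Category.{v} T] [Preadditive T] [HasZeroObject T]
  [HasShift T ℤ] [∀ n : ℤ, (shiftFunctor T n).Additive] [Pretriangulated T]

/-- A localizing subcategory of a (pre)triangulated category, encoded as a set of
objects: it is closed under isomorphisms, contains the zero object, is stable
under shifts, closed under cones of distinguished triangles (hence a full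
triangulated subcategory), and closed under arbitrary small coproducts
(phrased via colimit cofans, so that no global existence of coproducts
is needed). -/
structure IsLocalizingSub (S : Set T) : Prop where
  zero_mem : (0 : T) ∈ S
  mem_of_iso : ∀ {x y : T}, (x ≅ y) → x ∈ S → y ∈ S
  shift_mem : ∀ (n : ℤ) {x : T}, x ∈ S → x⟦n⟧ ∈ S
  cone_mem : ∀ (Tr : Triangle T), Tr ∈ distinguishedTriangles →
    Tr.obj₁ ∈ S → Tr.obj₂ ∈ S → Tr.obj₃ ∈ S
  coprod_mem : ∀ {ι : Type w} (f : ι → T) (c : Cofan f), IsColimit c →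
    (∀ i, f i ∈ S) → c.pt ∈ S

/-- A colocalizing subcategory: as `IsLocalizingSub` but with products instead
of coproducts. -/
structure IsColocalizingSub (S : Set T) : Prop where
  zero_mem : (0 : T) ∈ S
  mem_of_iso : ∀ {x y : T}, (x ≅ y) → x ∈ S → y ∈ S
  shift_mem : ∀ (n : ℤ) {x : T}, x ∈ S → x⟦n⟧ ∈ S
  cone_mem : ∀ (Tr : Triangle T), Tr ∈ distinguishedTriangles →
    Tr.obj₁ ∈ S → Tr.obj₂ ∈ S → Tr.obj₃ ∈ S
  prod_mem : ∀ {ι : Type w} (f : ι → T) (c : Fan f), IsLimit c →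
    (∀ i, f i ∈ S) → c.pt ∈ S

/-- `Loc S`: the smallest localizing subcategory containing the set of
objects `S` (the intersection of all localizing subcategories containing it). -/
def Loc (S : Set T) : Set T :=
  ⋂₀ {L : Set T | IsLocalizingSub.{w} L ∧ S ⊆ L}

/-- The right orthogonal of a set of objects. -/
def rightOrth (C : Set T) : Set T :=
  {x : T | ∀ ⦃c : T⦄, c ∈ C → ∀ (g : c ⟶ x), g = 0}

end TriangulatedDefs

section CompactDefs

variable {T : Type u} [Category.{v} T] [Preadditive T]

/-- The canonical comparison map `⨁ᵢ Hom(x, fᵢ) →+ Hom(x, ∐ f)` associated to a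
cofan `c` on a family `f`. -/
noncomputable def cofanHomComparison {ι : Type w} (x : T) (f : ι → T) (c : Cofan f) :
    (Π₀ i, (x ⟶ f i)) →+ (x ⟶ c.pt) :=
  letI := Classical.decEq ι
  DFinsupp.sumAddHom (fun i => AddMonoidHom.mk' (fun φ => φ ≫ c.inj i)
    (fun φ ψ => Preadditive.add_comp _ _ _ φ ψ (c.inj i)))

/-- An object `x` is compact if `Hom(x, -)` commutes with arbitrary small
coproducts, i.e. for every colimit cofan on a family `f`, the canonical map
`⨁ᵢ Hom(x, fᵢ) → Hom(x, ∐ f)` is bijective. -/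
def IsCompactObj (x : T) : Prop :=
  ∀ ⦃ι : Type w⦄ (f : ι → T) (c : Cofan f), IsColimit c →
    Function.Bijective (cofanHomComparison x f c)

end CompactDefs

section DR

variable (R : Type u) [CommRing R] [HasDerivedCategory.{w'} (ModuleCat.{u} R)]

/-- The `R`-module `M`, regarded as an object of the derived category `D(R)`,
as a complex concentrated in degree `0`. -/
noncomputable def smod (M : ModuleCat.{u} R) : DerivedCategory (ModuleCat.{u} R) :=
  (DerivedCategory.singleFunctor (ModuleCat.{u} R) 0).obj M

end DR
/-- An element `c` of a preorder is *finite* (compact) if whenever `c ≤ ⋁S` for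
a set `S` admitting a least upper bound, there is a finite subset `K ⊆ S`
admitting a least upper bound with `c ≤ ⋁K`. -/
def IsFiniteElt {α : Type*} [Preorder α] (c : α) : Prop :=
  ∀ (S : Set α) (b : α), IsLUB S b → c ≤ b →
    ∃ K ⊆ S, K.Finite ∧ ∃ b' : α, IsLUB K b' ∧ c ≤ b'

section Statement14

variable (R : Type u) [CommRing R] [HasDerivedCategory.{w'} (ModuleCat.{u} R)]

/-- The localizing subcategory `Loc({R_f : f ∈ √J})` of `D(R)`. -/
noncomputable def locRad (J : Ideal R) : Set (DerivedCategory (ModuleCat.{u} R)) :=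
  Loc.{u} {x | ∃ f ∈ J.radical, x = smod R (ModuleCat.of R (Localization.Away f))}

section Orthogonal

variable {T : Type u} [Category.{v} T] [Preadditive T] [HasZeroObject T]
  [HasShift T ℤ] [∀ n : ℤ, (shiftFunctor T n).Additive] [Pretriangulated T]

lemma subset_loc (S : Set T) : S ⊆ Loc.{w} S :=
  Set.subset_sInter fun _ hL ↦ hL.2

lemma loc_subset {S L : Set T} (hL : IsLocalizingSub.{w} L) (hS : S ⊆ L) : Loc.{w} S ⊆ L :=
  Set.sInter_subset_of_mem ⟨hL, hS⟩

lemma loc_mono {S S' : Set T} (h : S ⊆ S') : Loc.{w} S ⊆ Loc.{w} S' :=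
  Set.sInter_subset_sInter fun _ hL ↦ ⟨hL.1, h.trans hL.2⟩

lemma isLocalizingSub_leftOrthogonal (P : ObjectProperty T) [P.IsStableUnderShift ℤ] :
    IsLocalizingSub.{w} {X | P.leftOrthogonal X} where
  zero_mem := P.leftOrthogonal.prop_zero
  mem_of_iso e hX := P.leftOrthogonal.prop_of_iso e hX
  shift_mem n _ hX := P.leftOrthogonal.le_shift n _ hX
  cone_mem Tr hTr h₁ h₂ := P.leftOrthogonal.ext_of_isTriangulatedClosed₃ Tr hTr h₁ h₂
  coprod_mem _ c hc h _ g hY := Cofan.IsColimit.hom_ext hc _ _ fun i ↦ by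
    rw [comp_zero, h i (c.inj i ≫ g) hY]

end Orthogonal

section Annihilated

variable {A : Type*} [Semiring A] {C D : Type*} [Category* C] [Preadditive C] [Linear A C]
  [Category* D] [Preadditive D] [Linear A D] {s : Set A}

variable (C s) in
/-- The objects of an `A`-linear category on which every scalar in `s` acts as zero. -/
def annihilatedBy : ObjectProperty C :=
  fun X ↦ ∀ a ∈ s, a • 𝟙 X = 0

lemma annihilatedBy_map (F : C ⥤ D) [F.Additive] [F.Linear A] {X : C}
    (hX : annihilatedBy C s X) : annihilatedBy D s (F.obj X) := fun a ha ↦ by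
  rw [← F.map_id, ← F.map_smul, hX a ha, F.map_zero]

instance annihilatedBy_isStableUnderShift {M : Type*} [AddMonoid M] [HasShift C M]
    [∀ m : M, (shiftFunctor C m).Additive] [∀ m : M, (shiftFunctor C m).Linear A] :
    (annihilatedBy C s).IsStableUnderShift M where
  isStableUnderShiftBy m := ⟨fun _ hX ↦ annihilatedBy_map (shiftFunctor C m) hX⟩

lemma leftOrthogonal_annihilatedBy {X : C} {a : A} (ha : a ∈ s) (i : X ⟶ X) (hi : a • i = 𝟙 X) :
    (annihilatedBy C s).leftOrthogonal X := fun Y φ hY ↦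
  calc φ = (a • i) ≫ φ ≫ 𝟙 Y := by rw [hi, Category.id_comp, Category.comp_id]
    _ = i ≫ φ ≫ (a • 𝟙 Y) := by simp only [Linear.smul_comp, Linear.comp_smul]
    _ = 0 := by rw [hY a ha, comp_zero, comp_zero]

end Annihilated

section FiniteElements

variable {L α : Type*} [CompleteLattice L] {l : L → α} {u : α → L}

lemma IsFiniteElt.exists_isCompactElement [IsCompactlyGenerated L] [PartialOrder α]
    (gi : GaloisInsertion l u) {a : α} (ha : IsFiniteElt a) :
    ∃ k, IsCompactElement k ∧ l k = a := by
  have hLUB : IsLUB (l '' {k | IsCompactElement k ∧ k ≤ u a}) a := by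
    have := gi.gc.isLUB_l_image (isLUB_sSup {k | IsCompactElement k ∧ k ≤ u a})
    rwa [sSup_compact_le_eq, gi.l_u_eq] at this
  obtain ⟨t, ht, htfin, b, hb, hab⟩ := Set.exists_subset_image_finite_and.1 (ha _ a hLUB le_rfl)
  have hba : b ≤ a := hb.2 fun _ hx ↦ hLUB.1 (Set.image_mono ht hx)
  refine ⟨sSup t, ?_, ?_⟩
  · lift t to Finset L using htfin
    rw [← Finset.sup_id_eq_sSup]
    exact CompleteLattice.isCompactElement_finsetSup t fun k hk ↦ (ht hk).1
  · exact ((gi.gc.isLUB_l_image (isLUB_sSup t)).unique hb).trans (hba.antisymm hab)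

lemma isFiniteElt_of_galoisInsertion [Preorder α] (gi : GaloisInsertion l u) {k : L}
    (hk : ∀ s : Set L, k ≤ u (l (sSup s)) → ∃ t ⊆ s, t.Finite ∧ k ≤ u (l (sSup t))) :
    IsFiniteElt (l k) := by
  intro S b hb hkb
  have hkS : l k ≤ l (sSup (u '' S)) := hkb.trans (hb.2 (gi.isLUB_of_u_image (isLUB_sSup _)).1)
  obtain ⟨K, hKS, hKfin, hkK⟩ :=
    Set.exists_subset_image_finite_and.1 (hk (u '' S) ((gi.gc _ _).1 hkS))
  exact ⟨K, hKS, hKfin, _, gi.isLUB_of_u_image (isLUB_sSup _), (gi.gc _ _).2 hkK⟩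

end FiniteElements

lemma exists_finite_subset_le_radical_sSup {A : Type*} [CommSemiring A] {J : Ideal A} (hJ : J.FG)
    {s : Set (Ideal A)} (h : J ≤ (sSup s).radical) :
    ∃ t ⊆ s, t.Finite ∧ J ≤ (sSup t).radical := by
  obtain ⟨n, hn⟩ := Ideal.exists_pow_le_of_le_radical_of_fg h hJ
  obtain ⟨t, hts, ht⟩ := (CompleteLattice.isCompactElement_iff_exists_le_sSup_of_le_sSup _ _).1
    ((Submodule.fg_iff_compact _).1 (hJ.pow (n := n))) s hn
  rw [Finset.sup_id_eq_sSup] at ht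
  exact ⟨t, hts, t.finite_toSet, fun x hx ↦ ⟨n, ht (Ideal.pow_mem_pow hx n)⟩⟩

section LocRad

variable {R}

lemma leftOrthogonal_annihilatedBy_smod_away {s : Set R} {f : R} (hf : f ∈ s) :
    (annihilatedBy (DerivedCategory (ModuleCat.{u} R)) s).leftOrthogonal
      (smod R (ModuleCat.of R (Localization.Away f))) := by
  let i : ModuleCat.of R (Localization.Away f) ⟶ ModuleCat.of R (Localization.Away f) :=
    ModuleCat.ofHom (LinearMap.mulLeft R (IsLocalization.Away.invSelf f))
  have hi : f • i = 𝟙 _ := by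
    ext x
    change f • (IsLocalization.Away.invSelf f * x) = x
    rw [Algebra.smul_def, ← mul_assoc, IsLocalization.Away.mul_invSelf, one_mul]
  let F := DerivedCategory.singleFunctor (ModuleCat.{u} R) 0
  have hFi : f • F.map i = 𝟙 _ := by rw [← F.map_smul, hi, F.map_id]
  exact leftOrthogonal_annihilatedBy hf (F.map i) hFi

lemma locRad_subset_leftOrthogonal (J : Ideal R) :
    locRad R J ⊆ {X | (annihilatedBy (DerivedCategory (ModuleCat.{u} R))
      (J.radical : Set R)).leftOrthogonal X} := by
  refine loc_subset (isLocalizingSub_leftOrthogonal _) ?_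
  rintro _ ⟨f, hf, rfl⟩
  exact leftOrthogonal_annihilatedBy_smod_away hf

lemma radical_smul_top_of_smod_mem_locRad {J : Ideal R} {M : ModuleCat.{u} R}
    (hM : smod R M ∈ locRad R J) : J.radical • (⊤ : Submodule R M) = ⊤ := by
  let N : Submodule R M := J.radical • ⊤
  have hN : annihilatedBy (ModuleCat.{u} R) (J.radical : Set R) (ModuleCat.of R (M ⧸ N)) := by
    intro r hr
    ext x
    exact (Submodule.Quotient.mk_eq_zero N).2 (Submodule.smul_mem_smul hr Submodule.mem_top)
  have hπ : ModuleCat.ofHom N.mkQ = 0 :=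
    (DerivedCategory.singleFunctor (ModuleCat.{u} R) 0).map_injective <|
      (locRad_subset_leftOrthogonal J hM _ (annihilatedBy_map _ hN)).trans
        (Functor.map_zero _ _ _).symm
  calc N = LinearMap.ker N.mkQ := N.ker_mkQ.symm
    _ = ⊤ := LinearMap.ker_eq_top.2 (congrArg ModuleCat.Hom.hom hπ)

lemma smod_away_mem_locRad_iff {J : Ideal R} {f : R} :
    smod R (ModuleCat.of R (Localization.Away f)) ∈ locRad R J ↔ f ∈ J.radical := by
  refine ⟨fun h ↦ ?_, fun hf ↦ subset_loc _ ⟨f, hf, rfl⟩⟩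
  have hmap : J.radical.map (algebraMap R (Localization.Away f)) = ⊤ := by
    rw [← Submodule.restrictScalars_eq_top_iff R, ← Ideal.smul_top_eq_map]
    exact radical_smul_top_of_smod_mem_locRad h
  by_contra hf
  exact (IsLocalization.map_algebraMap_ne_top_iff_disjoint (Submonoid.powers f) _ _).2
    ((Ideal.disjoint_powers_iff_notMem f J.radical_isRadical).2 hf) hmap

lemma locRad_subset_locRad_iff {I J : Ideal R} : locRad R I ⊆ locRad R J ↔ I ≤ J.radical := by
  refine ⟨fun h f hf ↦ smod_away_mem_locRad_iff.1
    (h (smod_away_mem_locRad_iff.2 (Ideal.le_radical hf))), fun h ↦ loc_mono ?_⟩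
  rintro _ ⟨f, hf, rfl⟩
  exact ⟨f, Ideal.radical_le_radical_iff.2 h hf, rfl⟩

variable (R) in
/-- The poset of localizing subcategories of `D(R)` of the form `Loc({R_f : f ∈ √J})`, spelled as
the subtype on which `isFiniteElt_locRad_iff` is stated. -/
abbrev LocRadPoset : Type _ :=
  {L : Set (DerivedCategory (ModuleCat.{u} R)) // ∃ J : Ideal R, L = locRad R J}

/-- The ideal of those `f` with `R_f` in `L`; it recovers `√J` from `locRad R J`. -/
def LocRadPoset.awayIdeal (L : LocRadPoset R) : Ideal R where
  carrier := {f | smod R (ModuleCat.of R (Localization.Away f)) ∈ L.1}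
  zero_mem' := by
    obtain ⟨_, J, rfl⟩ := L
    exact smod_away_mem_locRad_iff.2 J.radical.zero_mem
  add_mem' hf hg := by
    obtain ⟨_, J, rfl⟩ := L
    exact smod_away_mem_locRad_iff.2 (J.radical.add_mem
      (smod_away_mem_locRad_iff.1 hf) (smod_away_mem_locRad_iff.1 hg))
  smul_mem' r _ hf := by
    obtain ⟨_, J, rfl⟩ := L
    exact smod_away_mem_locRad_iff.2 (J.radical.smul_mem r (smod_away_mem_locRad_iff.1 hf))

variable (R) in
/-- `locRad` as a map from ideals to the poset of its values. -/
def LocRadPoset.ofIdeal (J : Ideal R) : LocRadPoset R :=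
  ⟨locRad R J, J, rfl⟩

lemma LocRadPoset.awayIdeal_ofIdeal (J : Ideal R) : (ofIdeal R J).awayIdeal = J.radical :=
  Ideal.ext fun _ ↦ smod_away_mem_locRad_iff

variable (R) in
/-- The adjunction exhibiting `LocRadPoset R` as the quotient of the lattice of ideals of `R` by
the closure operator `J ↦ √J`. -/
def LocRadPoset.galoisInsertion : GaloisInsertion (ofIdeal R) awayIdeal :=
  GaloisConnection.toGaloisInsertion
    (by
      rintro I ⟨_, J, rfl⟩
      rw [← ofIdeal, awayIdeal_ofIdeal]
      exact locRad_subset_locRad_iff)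
    (by
      rintro ⟨_, J, rfl⟩
      rw [← ofIdeal, awayIdeal_ofIdeal]
      exact locRad_subset_locRad_iff.2 (Ideal.le_radical.trans Ideal.le_radical))

end LocRad

/-- Theorem: in the poset (ordered by inclusion) of localizing subcategories of
`D(R)` of the form `Loc({R_f : f ∈ √J})` with `J` an ideal, the finite elements
are exactly those with `J` finitely generated. -/
theorem isFiniteElt_locRad_iff (J : Ideal R) :
    IsFiniteElt
      (⟨locRad R J, J, rfl⟩ :
        {L : Set (DerivedCategory (ModuleCat.{u} R)) //
          ∃ J' : Ideal R, L = locRad R J'}) ↔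
    ∃ J' : Ideal R, J'.FG ∧ locRad R J = locRad R J' := by
  constructor
  · intro hfin
    obtain ⟨J', hJ', h⟩ := hfin.exists_isCompactElement (LocRadPoset.galoisInsertion R)
    exact ⟨J', (Submodule.fg_iff_compact J').2 hJ', congrArg Subtype.val h.symm⟩
  · rintro ⟨J', hJ', h⟩
    have hJJ' : (⟨locRad R J, J, rfl⟩ : LocRadPoset R) = LocRadPoset.ofIdeal R J' :=
      Subtype.ext h
    rw [hJJ']
    refine isFiniteElt_of_galoisInsertion (LocRadPoset.galoisInsertion R) fun s hs ↦ ?_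
    simp only [LocRadPoset.awayIdeal_ofIdeal] at hs ⊢
    exact exists_finite_subset_le_radical_sSup hJ' hs

end Statement14
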